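/- Let k ≥ m ≥ 2 be integers and let q be a positive integer with (m−1)·φ(q) < k, where φ is Euler's totient function. Then the set A = {(x_1,…,x_m) ∈ ℤ^m : x_1 ≡ x_2 ≡ ⋯ ≡ x_m (mod q)} is (m,k)-plausible, and consequently δ(m,k) ≤ 1/q^{m−1}. -/

import Mathlib

open Filter Real

/-- A `k`-tuple of integers is admissible if for every prime `p` its entries
do not cover all residue classes mod `p`. -/
def AdmissibleTuple {k : ℕ} (x : Fin k → ℤ) : Prop :=
  ∀ p : ℕ, p.Prime → ∃ r : ZMod p, ∀ i, (x i : ZMod p) ≠ r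

/-- An `(m,k)`-plausible set: translation invariant, permutation invariant, and
every admissible `k`-tuple of distinct integers contains an `m`-subtuple lying in `A`. -/
def Plausible (m k : ℕ) (A : Set (Fin m → ℤ)) : Prop :=
  (∀ h ∈ A, ∀ t : ℤ, (fun i => h i + t) ∈ A) ∧
  (∀ h ∈ A, ∀ σ : Equiv.Perm (Fin m), (h ∘ σ) ∈ A) ∧
  (∀ x : Fin k → ℤ, Function.Injective x → AdmissibleTuple x →
    ∃ f : Fin m → Fin k, Function.Injective f ∧ (x ∘ f) ∈ A)

/-- The number of points of `A` in the box `[-N, N]^m`. -/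
noncomputable def boxCount (m : ℕ) (A : Set (Fin m → ℤ)) (N : ℕ) : ℕ :=
  Nat.card {h : Fin m → ℤ // h ∈ A ∧ ∀ i, |h i| ≤ (N : ℤ)}

/-- The liminf density of `A ⊆ ℤ^m` in boxes `[-N, N]^m`. -/
noncomputable def lowerBoxDensity (m : ℕ) (A : Set (Fin m → ℤ)) : ℝ :=
  Filter.liminf (fun N : ℕ => (boxCount m A N : ℝ) / (2 * N) ^ m) Filter.atTop

/-- `δ(m,k)`: the infimum over `(m,k)`-plausible sets `A` of the liminf density of `A`. -/
noncomputable def delta (m k : ℕ) : ℝ :=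
  sInf { d : ℝ | ∃ A : Set (Fin m → ℤ), Plausible m k A ∧ d = lowerBoxDensity m A }

/-!
The Chinese remainder theorem, applied to the residue class that an admissible tuple misses modulo
each prime divisor of `q`, translates the tuple into the units modulo `q`. There are only `φ(q)`
unit classes, so by pigeonhole some class contains `m` of the `k` entries. For the density, a tuple
congruent modulo `q` is a choice of one of the `q` residue classes followed by `m` independent
members of that class, which has density `1 / q` in `[-N, N]`; this gives `q · (1 / q) ^ m`.
-/

section Plausibility

lemma exists_int_forall_intCast_eq {ι : Type*} [Finite ι] {n : ι → ℕ}
    (hn : Pairwise (Function.onFun Nat.Coprime n)) (r : ∀ i, ZMod (n i)) :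
    ∃ a : ℤ, ∀ i, (a : ZMod (n i)) = r i := by
  have := Fintype.ofFinite ι
  obtain ⟨y, hy⟩ := (ZMod.prodEquivPi n hn).surjective r
  obtain ⟨a, rfl⟩ := ZMod.intCast_surjective y
  exact ⟨a, fun i => by rw [← hy, map_intCast, Pi.intCast_apply]⟩

lemma isUnit_intCast_of_forall_prime_dvd {q : ℕ} {z : ℤ}
    (h : ∀ p : ℕ, p.Prime → p ∣ q → (z : ZMod p) ≠ 0) : IsUnit (z : ZMod q) := by
  rw [ZMod.coe_int_isUnit_iff_isCoprime, Int.isCoprime_iff_nat_coprime]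
  refine Nat.coprime_of_dvd fun p hp hpq hpz => h p hp (by simpa using hpq) ?_
  exact (ZMod.intCast_zmod_eq_zero_iff_dvd z p).2 (Int.natCast_dvd.2 hpz)

lemma AdmissibleTuple.exists_forall_isUnit_sub {k q : ℕ} {x : Fin k → ℤ}
    (hx : AdmissibleTuple x) (hq : q ≠ 0) : ∃ a : ℤ, ∀ i, IsUnit ((x i - a : ℤ) : ZMod q) := by
  have hprime (p : q.primeFactors) : (p : ℕ).Prime := Nat.prime_of_mem_primeFactors p.2
  choose r hr using fun p : q.primeFactors => hx p (hprime p)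
  have hcoprime : Pairwise (Function.onFun Nat.Coprime fun p : q.primeFactors => (p : ℕ)) :=
    fun p p' hne => (Nat.coprime_primes (hprime p) (hprime p')).2 (Subtype.coe_injective.ne hne)
  obtain ⟨a, ha⟩ := exists_int_forall_intCast_eq hcoprime r
  refine ⟨a, fun i => isUnit_intCast_of_forall_prime_dvd fun p hp hpq => ?_⟩
  have hmem : p ∈ q.primeFactors := Nat.mem_primeFactors.2 ⟨hp, hpq, hq⟩
  rw [Int.cast_sub, sub_ne_zero, ha ⟨p, hmem⟩]
  exact hr ⟨p, hmem⟩ i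

lemma exists_embedding_forall_apply_eq {ι α : Type*} [Fintype ι] [Fintype α] (f : ι → α) {m : ℕ}
    (h : Fintype.card α * (m - 1) < Fintype.card ι) :
    ∃ (a : α) (g : Fin m ↪ ι), ∀ i, f (g i) = a := by
  classical
  obtain ⟨a, ha⟩ := Fintype.exists_lt_card_fiber_of_mul_lt_card f h
  have hcard : Fintype.card (Fin m) ≤ Fintype.card {i // f i = a} := by
    rw [Fintype.card_fin, Fintype.card_subtype]
    exact Nat.le_of_pred_lt ha
  obtain ⟨g⟩ := Function.Embedding.nonempty_of_card_le hcard
  exact ⟨a, g.trans (Function.Embedding.subtype _), fun i => (g i).2⟩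

/-- The tuples whose entries all lie in one residue class modulo `q`; the set `A` of the theorem. -/
def congruentTuples (m q : ℕ) : Set (Fin m → ℤ) :=
  {h | ∀ i j, (h i : ZMod q) = (h j : ZMod q)}

theorem plausible_congruentTuples {m k q : ℕ} (hq : q ≠ 0) (hqk : (m - 1) * q.totient < k) :
    Plausible m k (congruentTuples m q) := by
  have : NeZero q := ⟨hq⟩
  refine ⟨fun h hh t i j => ?_, fun h hh σ i j => hh (σ i) (σ j), fun x _ hx => ?_⟩
  · simp only [Int.cast_add, hh i j]
  · obtain ⟨a, ha⟩ := hx.exists_forall_isUnit_sub hq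
    obtain ⟨u, g, hg⟩ := exists_embedding_forall_apply_eq (m := m) (fun i => (ha i).unit) <| by
      rwa [ZMod.card_units_eq_totient, Fintype.card_fin, mul_comm]
    have hclass (i : Fin m) : (x (g i) : ZMod q) = u + a := by
      rw [← hg i, IsUnit.unit_spec, Int.cast_sub, sub_add_cancel]
    exact ⟨g, g.injective, fun i j => (hclass i).trans (hclass j).symm⟩

end Plausibility

section Density

open Finset Topology

lemma abs_card_Ioc_filter_modEq_sub_le {a b r : ℤ} (hab : a ≤ b) (hr : 0 < r) (v : ℤ) :
    |(#{z ∈ Ioc a b | z ≡ v [ZMOD r]} : ℚ) - (b - a) / r| ≤ 1 := by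
  have hab' : (a : ℚ) ≤ b := by exact_mod_cast hab
  have hmono : ⌊(a - v : ℚ) / r⌋ ≤ ⌊(b - v : ℚ) / r⌋ := by gcongr
  have hcard : (#{z ∈ Ioc a b | z ≡ v [ZMOD r]} : ℚ) =
      ⌊(b - v : ℚ) / r⌋ - ⌊(a - v : ℚ) / r⌋ := by
    have := Int.Ioc_filter_modEq_card a b hr v
    rw [max_eq_left (sub_nonneg.2 hmono)] at this
    exact_mod_cast this
  have hfract : (#{z ∈ Ioc a b | z ≡ v [ZMOD r]} : ℚ) - (b - a) / r =
      Int.fract ((a - v : ℚ) / r) - Int.fract ((b - v : ℚ) / r) := by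
    rw [hcard, Int.fract, Int.fract]
    ring
  rw [hfract]
  exact (Int.abs_sub_lt_one_of_floor_eq_floor (by simp only [Int.floor_fract])).le

lemma abs_card_Icc_filter_intCast_eq_sub_le {q : ℕ} (hq : q ≠ 0) (r : ZMod q) (N : ℕ) :
    |(#{z ∈ Icc (-N : ℤ) N | ((z : ℤ) : ZMod q) = r} : ℝ) - (2 * N + 1) / q| ≤ 1 := by
  obtain ⟨v, rfl⟩ := ZMod.intCast_surjective r
  have hIoc : Icc (-N : ℤ) N = Ioc (-N - 1 : ℤ) N := by
    ext z
    simp only [mem_Icc, mem_Ioc]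
    omega
  have hlength : (N : ℝ) - ((-N - 1 : ℤ) : ℝ) = 2 * N + 1 := by
    push_cast
    ring
  have hbound := (Rat.cast_le (K := ℝ)).2 <| abs_card_Ioc_filter_modEq_sub_le
    (a := -N - 1) (b := N) (r := q) (by omega) (by omega) v
  simp only [Rat.cast_abs, Rat.cast_sub, Rat.cast_div, Rat.cast_natCast, Rat.cast_intCast,
    Rat.cast_one, hlength, Int.cast_natCast] at hbound
  simpa only [hIoc, ZMod.intCast_eq_intCast_iff] using hbound

lemma tendsto_card_Icc_filter_intCast_eq_div {q : ℕ} (hq : q ≠ 0) (r : ZMod q) :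
    Tendsto (fun N : ℕ => (#{z ∈ Icc (-N : ℤ) N | ((z : ℤ) : ZMod q) = r} : ℝ) / (2 * N)) atTop
      (𝓝 (1 / q)) := by
  rw [tendsto_iff_norm_sub_tendsto_zero]
  refine squeeze_zero' (Eventually.of_forall fun N => norm_nonneg _) ?_
    (tendsto_one_div_atTop_nhds_zero_nat (𝕜 := ℝ))
  filter_upwards [eventually_gt_atTop 0] with N hN
  have h2N : (0 : ℝ) < 2 * N := by positivity
  have hq' : (1 / q : ℝ) ≤ 1 := div_le_one_of_le₀ (by exact_mod_cast Nat.pos_of_ne_zero hq)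
    (by positivity)
  have hcard := abs_card_Icc_filter_intCast_eq_sub_le hq r N
  set c : ℝ := (#{z ∈ Icc (-N : ℤ) N | ((z : ℤ) : ZMod q) = r} : ℝ)
  calc ‖c / (2 * N) - 1 / q‖ = |(c - (2 * N + 1) / q) + 1 / q| / (2 * N) := by
        have hsplit : c / (2 * N) - 1 / q = ((c - (2 * N + 1) / q) + 1 / q) / (2 * N) := by
          field_simp
          ring
        rw [hsplit, Real.norm_eq_abs, abs_div, abs_of_pos h2N]
    _ ≤ (1 + 1) / (2 * N) := by
        gcongr
        refine (abs_add_le _ _).trans (add_le_add hcard ?_)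
        rwa [abs_of_nonneg (by positivity)]
    _ = 1 / N := by
        rw [one_add_one_eq_two, div_mul_cancel_left₀ two_ne_zero, one_div]

lemma boxCount_congruentTuples {m q : ℕ} [NeZero m] [NeZero q] (N : ℕ) :
    boxCount m (congruentTuples m q) N =
      ∑ r : ZMod q, #{z ∈ Icc (-N : ℤ) N | ((z : ℤ) : ZMod q) = r} ^ m := by
  classical
  let box : Finset (Fin m → ℤ) := Fintype.piFinset fun _ => Icc (-N : ℤ) N
  have hbox : boxCount m (congruentTuples m q) N = #{h ∈ box | h ∈ congruentTuples m q} := by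
    refine Nat.subtype_card _ fun h => ?_
    simp only [box, mem_filter, Fintype.mem_piFinset, mem_Icc, abs_le, and_comm]
  have hfiber (r : ZMod q) : {h ∈ {h ∈ box | h ∈ congruentTuples m q} | ((h 0 : ℤ) : ZMod q) = r} =
      Fintype.piFinset fun _ => {z ∈ Icc (-N : ℤ) N | ((z : ℤ) : ZMod q) = r} := by
    ext h
    simp only [box, mem_filter, Fintype.mem_piFinset]
    constructor
    · rintro ⟨⟨hN, hcongr⟩, rfl⟩ i
      exact ⟨hN i, hcongr i 0⟩
    · intro h'
      exact ⟨⟨fun i => (h' i).1, fun i j => (h' i).2.trans (h' j).2.symm⟩, (h' 0).2⟩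
  rw [hbox, card_eq_sum_card_fiberwise (f := fun h => ((h 0 : ℤ) : ZMod q)) (t := univ)
    fun _ _ => mem_coe.2 (mem_univ _)]
  simp only [hfiber, Fintype.card_piFinset_const]

theorem lowerBoxDensity_congruentTuples {m q : ℕ} (hm : m ≠ 0) (hq : q ≠ 0) :
    lowerBoxDensity m (congruentTuples m q) = 1 / (q : ℝ) ^ (m - 1) := by
  have : NeZero m := ⟨hm⟩
  have : NeZero q := ⟨hq⟩
  have hlim := tendsto_finsetSum (univ : Finset (ZMod q)) fun r _ =>
    (tendsto_card_Icc_filter_intCast_eq_div hq r).pow m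
  have hsum : ∑ _r : ZMod q, (1 / (q : ℝ)) ^ m = 1 / (q : ℝ) ^ (m - 1) := by
    have hq' : (q : ℝ) ≠ 0 := Nat.cast_ne_zero.2 hq
    rw [sum_const, card_univ, ZMod.card, nsmul_eq_mul, ← mul_pow_sub_one hm, ← mul_assoc,
      mul_one_div_cancel hq', one_mul, one_div_pow]
  rw [← hsum, ← hlim.liminf_eq]
  simp only [lowerBoxDensity, boxCount_congruentTuples, Nat.cast_sum, Nat.cast_pow, sum_div,
    div_pow]

end Density

lemma lowerBoxDensity_nonneg (m : ℕ) (A : Set (Fin m → ℤ)) : 0 ≤ lowerBoxDensity m A := by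
  rw [lowerBoxDensity, liminf_eq]
  exact Real.sSup_nonneg' ⟨0, Eventually.of_forall fun N => by positivity, le_rfl⟩

lemma delta_le_lowerBoxDensity {m k : ℕ} {A : Set (Fin m → ℤ)} (hA : Plausible m k A) :
    delta m k ≤ lowerBoxDensity m A :=
  csInf_le ⟨0, by rintro _ ⟨B, -, rfl⟩; exact lowerBoxDensity_nonneg m B⟩ ⟨A, hA, rfl⟩

theorem stmt_6 (m k q : ℕ) (hm : 2 ≤ m) (hmk : m ≤ k) (hq : 1 ≤ q)
    (hqk : (m - 1) * q.totient < k) :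
    Plausible m k {h : Fin m → ℤ | ∀ i j : Fin m, (h i : ZMod q) = (h j : ZMod q)} ∧
      delta m k ≤ 1 / (q : ℝ) ^ (m - 1) := by
  have hm' : m ≠ 0 := by omega
  have hq' : q ≠ 0 := by omega
  have hA : Plausible m k (congruentTuples m q) := plausible_congruentTuples hq' hqk
  exact ⟨hA, (delta_le_lowerBoxDensity hA).trans_eq (lowerBoxDensity_congruentTuples hm' hq')⟩
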